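/- Let (M, h, ∇) be a quasi-statistical manifold (with h symmetric or skew-symmetric) and let (ĥ, ∇̂) be the induced generalized quasi-statistical structure on TM ⊕ T*M, where ĥ is ⟨·,·⟩ if h is symmetric and (·,·) if h is skew-symmetric, and ∇̂_{X+α}(Y+β) := ∇_X Y + h(∇_X h⁻¹(β)). Then the generalized dual quasi-statistical connection ∇̂*, defined by ĥ(Y+β, ∇̂*_{X+α}(Z+γ)) = X(ĥ(Y+β, Z+γ)) − ĥ(∇̂_{X+α}(Y+β), Z+γ), is given by ∇̂*_{X+α}(Z+γ) = h⁻¹(∇_X h(Z)) + ∇_X γ. -/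

import Mathlib

/-!
Pairing `τ = Y + β` with `∇̂*_X (Z + γ)` produces a covector term `(∇_X γ)(Y)`, which is
`X(γ Y) − γ(∇_X Y)` by definition of the induced connection on one-forms, and a vector term
`β(h⁻¹(∇_X h(Z)))`. Writing `β = h(B)` and swapping the arguments of `h`, which costs a sign
`ε = ±1`, the vector term becomes `ε (∇_X h(Z))(B) = ε (X(h(Z,B)) − h(Z, ∇_X B))`; swapping back
cancels `ε` and leaves `X(β Z) − h(∇_X h⁻¹(β), Z)`. These two identities combine to the duality
equation for both pairings.
-/

namespace GQS

variable (A : Type*) [CommRing A] [Algebra ℝ A]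

/-- Vector fields on the "manifold" with smooth functions `A`. -/
abbrev Vec := Derivation ℝ A A
/-- One-forms. -/
abbrev Form := Vec A →ₗ[A] A
/-- Sections of the generalized tangent bundle `TM ⊕ T*M`. -/
abbrev Gen := Vec A × Form A

variable {A}

/-- An affine connection on vector fields. -/
structure Conn (A : Type*) [CommRing A] [Algebra ℝ A] where
  smul : Vec A → Vec A → Vec A
  map_add_left : ∀ X Y Z, smul (X + Y) Z = smul X Z + smul Y Z
  map_smul_left : ∀ (f : A) (X Y), smul (f • X) Y = f • smul X Y
  map_add_right : ∀ X Y Z, smul X (Y + Z) = smul X Y + smul X Z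
  leibniz : ∀ (X : Vec A) (f : A) (Y), smul X (f • Y) = X f • Y + f • smul X Y

/-- The induced connection on one-forms: `(∇_X α)(Y) = X(α Y) − α(∇_X Y)`. -/
def Conn.coSmul (D : Conn A) (X : Vec A) (α : Form A) : Form A where
  toFun Y := X (α Y) - α (D.smul X Y)
  map_add' Y Z := by
    simp only [map_add, D.map_add_right]; ring
  map_smul' f Y := by
    simp only [map_smul, smul_eq_mul, Derivation.leibniz, D.leibniz, map_add,
      RingHom.id_apply]
    ring

/-- The torsion of a connection. -/
def Conn.torsion (D : Conn A) (X Y : Vec A) : Vec A := D.smul X Y - D.smul Y X - ⁅X, Y⁆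

/-- The curvature operator of a connection, on vector fields. -/
def Conn.curv (D : Conn A) (X Y Z : Vec A) : Vec A :=
  D.smul X (D.smul Y Z) - D.smul Y (D.smul X Z) - D.smul ⁅X, Y⁆ Z

/-- The curvature operator of the induced connection on one-forms. -/
def Conn.coCurv (D : Conn A) (X Y : Vec A) (γ : Form A) : Form A :=
  D.coSmul X (D.coSmul Y γ) - D.coSmul Y (D.coSmul X γ) - D.coSmul ⁅X, Y⁆ γ


/-- Symmetric `(0,2)`-tensor (encoded through its musical isomorphism `φ = ♭_h`). -/
def Symm (φ : Vec A ≃ₗ[A] Form A) : Prop := ∀ X Y, φ X Y = φ Y X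

/-- Skew-symmetric `(0,2)`-tensor. -/
def Skew (φ : Vec A ≃ₗ[A] Form A) : Prop := ∀ X Y, φ X Y = - φ Y X

/-- `(∇_X h)(Y,Z)` for the tensor `h(X,Y) = φ X Y`. -/
def covh (D : Conn A) (φ : Vec A ≃ₗ[A] Form A) (X Y Z : Vec A) : A :=
  X (φ Y Z) - φ (D.smul X Y) Z - φ Y (D.smul X Z)

/-- `(d^∇ h)(X,Y,Z)`. -/
def dnabla (D : Conn A) (φ : Vec A ≃ₗ[A] Form A) (X Y Z : Vec A) : A :=
  covh D φ X Y Z - covh D φ Y X Z + φ (D.torsion X Y) Z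

/-- `(M,h,∇)` is a quasi-statistical manifold: `d^∇ h = 0`. -/
def QuasiStat (D : Conn A) (φ : Vec A ≃ₗ[A] Form A) : Prop :=
  ∀ X Y Z, dnabla D φ X Y Z = 0

/-- The bracket `[X+α, Y+β]_∇ = [X,Y] + ∇_X β − ∇_Y α` on `TM ⊕ T*M`. -/
def gbracket (D : Conn A) (σ τ : Gen A) : Gen A :=
  (⁅σ.1, τ.1⁆, D.coSmul σ.1 τ.2 - D.coSmul τ.1 σ.2)

/-- The generalized complex structure `Ĵ_c(X+α) = −h⁻¹(α) + h(X)`. -/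
def Jc (φ : Vec A ≃ₗ[A] Form A) (σ : Gen A) : Gen A := (-(φ.symm σ.2), φ σ.1)

/-- The generalized product structure `Ĵ_p(X+α) = h⁻¹(α) + h(X)`. -/
def Jp (φ : Vec A ≃ₗ[A] Form A) (σ : Gen A) : Gen A := (φ.symm σ.2, φ σ.1)

/-- The natural indefinite metric `⟨X+α, Y+β⟩ = −(1/2)(α(Y)+β(X))`. -/
noncomputable def pairInd (σ τ : Gen A) : A := -((2⁻¹ : ℝ) • (σ.2 τ.1 + τ.2 σ.1))

/-- The natural symplectic structure `(X+α, Y+β) = −(1/2)(α(Y)−β(X))`. -/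
noncomputable def pairSymp (σ τ : Gen A) : A := -((2⁻¹ : ℝ) • (σ.2 τ.1 - τ.2 σ.1))

/-- The bilinear form `ȟ(X+α, Y+β) = h(X,Y) + h(h⁻¹α, h⁻¹β)`. -/
def hcheck (φ : Vec A ≃ₗ[A] Form A) (σ τ : Gen A) : A :=
  φ σ.1 τ.1 + φ (φ.symm σ.2) (φ.symm τ.2)

/-- The Nijenhuis tensor of `J` with respect to `∇`. -/
def nijenhuis (D : Conn A) (J : Gen A → Gen A) (σ τ : Gen A) : Gen A :=
  gbracket D (J σ) (J τ) - J (gbracket D (J σ) τ) - J (gbracket D σ (J τ))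
    + J (J (gbracket D σ τ))

/-- The connection `∇̂_{X+α}(Y+β) = ∇_X Y + h(∇_X h⁻¹(β))` on `TM ⊕ T*M`. -/
def hatConn (D : Conn A) (φ : Vec A ≃ₗ[A] Form A) (σ τ : Gen A) : Gen A :=
  (D.smul σ.1 τ.1, φ (D.smul σ.1 (φ.symm τ.2)))

/-- The connection `∇̌_{X+α}(Y+β) = ∇_X Y + ∇_X β` on `TM ⊕ T*M`. -/
def checkConn (D : Conn A) (σ τ : Gen A) : Gen A :=
  (D.smul σ.1 τ.1, D.coSmul σ.1 τ.2)

/-- The generalized dual quasi-statistical connection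
`∇̂*_{X+α}(Z+γ) = h⁻¹(∇_X h(Z)) + ∇_X γ`. -/
def dualConn (D : Conn A) (φ : Vec A ≃ₗ[A] Form A) (σ τ : Gen A) : Gen A :=
  (φ.symm (D.coSmul σ.1 (φ τ.1)), D.coSmul σ.1 τ.2)

/-- Torsion of a connection `E` on `TM ⊕ T*M` (with respect to the bracket `[·,·]_∇`). -/
def gtorsion (D : Conn A) (E : Gen A → Gen A → Gen A) (σ τ : Gen A) : Gen A :=
  E σ τ - E τ σ - gbracket D σ τ

/-- `(D_σ ĥ)(τ,ν)` for a bilinear form `ĥ` on `TM ⊕ T*M`, with `(X+α)(f) = X(f)`. -/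
def gcov (E : Gen A → Gen A → Gen A) (hh : Gen A → Gen A → A) (σ τ ν : Gen A) : A :=
  σ.1 (hh τ ν) - hh (E σ τ) ν - hh τ (E σ ν)

/-- `(d^D ĥ)(σ,τ,ν)`. -/
def gdiff (D : Conn A) (E : Gen A → Gen A → Gen A) (hh : Gen A → Gen A → A)
    (σ τ ν : Gen A) : A :=
  gcov E hh σ τ ν - gcov E hh τ σ ν + hh (gtorsion D E σ τ) ν

/-- `(ĥ, D)` is a generalized quasi-statistical structure: `d^D ĥ = 0`. -/
def GenQuasiStat (D : Conn A) (E : Gen A → Gen A → Gen A) (hh : Gen A → Gen A → A) : Prop :=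
  ∀ σ τ ν, gdiff D E hh σ τ ν = 0

/-- The curvature operator of a connection `E` on `TM ⊕ T*M`. -/
def gcurv (D : Conn A) (E : Gen A → Gen A → Gen A) (σ τ ν : Gen A) : Gen A :=
  E σ (E τ ν) - E τ (E σ ν) - E (gbracket D σ τ) ν


theorem coSmul_apply (D : Conn A) (X : Vec A) (α : Form A) (Y : Vec A) :
    D.coSmul X α Y = X (α Y) - α (D.smul X Y) := rfl

/-- For symmetric `h`, the connection on vector fields dual to `h ∘ ∇_X ∘ h⁻¹` under the
evaluation pairing is `h⁻¹ ∘ ∇_X ∘ h`. -/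
theorem apply_symm_coSmul_of_symm (φ : Vec A ≃ₗ[A] Form A) (D : Conn A) (hs : Symm φ)
    (X Z : Vec A) (β : Form A) :
    β (φ.symm (D.coSmul X (φ Z))) = X (β Z) - φ (D.smul X (φ.symm β)) Z := by
  obtain ⟨B, rfl⟩ := φ.surjective β
  rw [hs B (φ.symm _), φ.apply_symm_apply, φ.symm_apply_apply, coSmul_apply, hs Z B,
    hs Z (D.smul X B)]

/-- The skew-symmetric counterpart of `apply_symm_coSmul_of_symm`; the two signs cancel. -/
theorem apply_symm_coSmul_of_skew (φ : Vec A ≃ₗ[A] Form A) (D : Conn A) (hs : Skew φ)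
    (X Z : Vec A) (β : Form A) :
    β (φ.symm (D.coSmul X (φ Z))) = X (β Z) - φ (D.smul X (φ.symm β)) Z := by
  obtain ⟨B, rfl⟩ := φ.surjective β
  rw [hs B (φ.symm _), φ.apply_symm_apply, φ.symm_apply_apply, coSmul_apply, hs Z B,
    hs Z (D.smul X B), Derivation.map_neg]
  ring

/-- the generalized dual quasi-statistical connection of `∇̂` (with respect to
`ĥ = ⟨·,·⟩` resp. `(·,·)`) is given by `∇̂*_{X+α}(Z+γ) = h⁻¹(∇_X h(Z)) + ∇_X γ`, i.e. this
formula satisfies the defining duality equation. -/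
theorem statement3 (φ : Vec A ≃ₗ[A] Form A) (D : Conn A) (hqs : QuasiStat D φ) :
    (Symm φ → ∀ σ τ ν : Gen A,
        pairInd τ (dualConn D φ σ ν) = σ.1 (pairInd τ ν) - pairInd (hatConn D φ σ τ) ν) ∧
    (Skew φ → ∀ σ τ ν : Gen A,
        pairSymp τ (dualConn D φ σ ν) = σ.1 (pairSymp τ ν) - pairSymp (hatConn D φ σ τ) ν) := by
  refine ⟨fun hs σ τ ν => ?_, fun hs σ τ ν => ?_⟩
  · have h := apply_symm_coSmul_of_symm φ D hs σ.1 ν.1 τ.2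
    simp only [pairInd, dualConn, hatConn, h, coSmul_apply, Derivation.map_neg,
      Derivation.map_smul, map_add]
    module
  · have h := apply_symm_coSmul_of_skew φ D hs σ.1 ν.1 τ.2
    simp only [pairSymp, dualConn, hatConn, h, coSmul_apply, Derivation.map_neg,
      Derivation.map_smul, map_sub]
    module

end GQS
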